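/- Let H be a Hopf algebra over a field k with antipode S, comultiplication Δ and counit ε, such that D := S ∘ S is a bialgebra automorphism with D^m = id, and suppose H is the direct sum of the eigenspaces E_{D,q^i}, 0 ≤ i ≤ m-1, for a primitive m-th root of unity q ∈ k (and k contains an element r of order 2m with r² = q when m is even). Set K = E_{D,1} = {x ∈ H : S(S(x)) = x} and M = the sum of the eigenspaces E_{D,q^i} with i ≠ 0, and assume H = K ⊕ M is a trivial extension: K is a subalgebra with Δ(K) ⊆ K ⊗ K and S(K) ⊆ K; K·M + M·K ⊆ M; Δ(M) ⊆ K ⊗ M + M ⊗ K; S(M) ⊆ M; and M·M = 0. Then H is almost involutive: there exists a bialgebra automorphism σ of H with σ ∘ σ = S ∘ S. -/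

import Mathlib

open Coalgebra HopfAlgebra TensorProduct

variable {k H : Type*}

/-- For submodules `U V` of `H`, the image of `U ⊗[k] V` in `H ⊗[k] H`. -/
noncomputable def Submodule.tmul [Field k] [AddCommGroup H] [Module k H]
    (U V : Submodule k H) : Submodule k (TensorProduct k H H) :=
  LinearMap.range (TensorProduct.mapIncl U V)

/-!
The theorem is the case `φ = S²` of a statement about a diagonalizable bialgebra automorphism `φ`
with square eigenvalues. Choose `s` with `s(λ)² = λ` and `s(1) = 1`, and let `P = s(φ)` act on the
`λ`-eigenspace as `s(λ)`, so that `P² = φ`. Since `M * M = 0`, nonzero products of eigenvectors have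
a factor in `K`, where `s(1 * λ) = s(1) * s(λ)`; this makes `P` multiplicative. Since
`Δ(H) ⊆ K ⊗ H + H ⊗ K`, the same identity shows that `P ⊗ P` is `s(φ ⊗ φ)` on `Δ(H)`, and `P` is
comultiplicative.
-/

lemma isSquare_of_odd_of_pow_eq_one {G : Type*} [Monoid G] {a : G} {n : ℕ} (hn : Odd n)
    (ha : a ^ n = 1) : IsSquare a := by
  obtain ⟨j, rfl⟩ := hn
  refine ⟨a ^ (j + 1), ?_⟩
  rw [← pow_add, show j + 1 + (j + 1) = 2 * j + 1 + 1 by ring, pow_succ, ha, one_mul]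

lemma exists_map_one_and_mul_self_eq_of_isSquare (G : Type*) [MulOneClass G] :
    ∃ s : G → G, s 1 = 1 ∧ ∀ a, IsSquare a → s a * s a = a := by
  have hroot (a : G) : ∃ b, (a = 1 → b = 1) ∧ (IsSquare a → b * b = a) := by
    by_cases hone : a = 1
    · exact ⟨1, fun _ ↦ rfl, fun _ ↦ by rw [hone, mul_one]⟩
    · by_cases hsq : IsSquare a
      · obtain ⟨b, hb⟩ := hsq
        exact ⟨b, fun h ↦ absurd h hone, fun _ ↦ hb.symm⟩
      · exact ⟨1, fun _ ↦ rfl, fun h ↦ absurd h hsq⟩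
  choose s hs_one hs using hroot
  exact ⟨s, hs_one 1 rfl, hs⟩

lemma linearMap_ext_of_iSup_eq_top {R V W ι : Type*} [Semiring R] [AddCommMonoid V]
    [AddCommMonoid W] [Module R V] [Module R W] {p : ι → Submodule R V} (hp : ⨆ i, p i = ⊤)
    {f g : V →ₗ[R] W} (hfg : ∀ i, ∀ x ∈ p i, f x = g x) : f = g :=
  LinearMap.eqLocus_eq_top.1 <| top_le_iff.1 <| hp ▸ iSup_le hfg

section Eigenspaces

open Module Module.End

variable {R V : Type*} [CommRing R] [AddCommGroup V] [Module R V]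

lemma comp_self_eq_of_eigenspace_le {ι : Type*} {D P : End R V} {s : R → R}
    (hP : ∀ μ, D.eigenspace μ ≤ P.eigenspace (s μ)) {ν : ι → R}
    (hν : ⨆ i, D.eigenspace (ν i) = ⊤) (hs : ∀ i, s (ν i) * s (ν i) = ν i) : P ∘ₗ P = D := by
  refine linearMap_ext_of_iSup_eq_top hν fun i x hx ↦ ?_
  have hPx : P x = s (ν i) • x := mem_eigenspace_iff.1 (hP _ hx)
  rw [LinearMap.comp_apply, hPx, map_smul, hPx, smul_smul, hs, mem_eigenspace_iff.1 hx]

lemma eigenspace_sup_iSup_ne_eq_top {ι : Type*} {D : End R V} {ν : ι → R}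
    (hν : ⨆ i, D.eigenspace (ν i) = ⊤) (μ : R) :
    D.eigenspace μ ⊔ ⨆ (i) (_ : ν i ≠ μ), D.eigenspace (ν i) = ⊤ := by
  refine top_le_iff.1 (hν ▸ iSup_le fun i ↦ ?_)
  rcases eq_or_ne (ν i) μ with hi | hi
  · exact hi ▸ le_sup_left
  · exact le_sup_of_le_right (le_iSup₂ (f := fun i (_ : ν i ≠ μ) ↦ D.eigenspace (ν i)) i hi)

variable [IsDomain R] [IsTorsionFree R V]

lemma exists_end_forall_eigenspace_le {D : End R V} (hD : ⨆ μ, D.eigenspace μ = ⊤) (s : R → R) :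
    ∃ P : End R V, ∀ μ, D.eigenspace μ ≤ P.eigenspace (s μ) := by
  classical
  have hint : DirectSum.IsInternal D.eigenspace :=
    DirectSum.isInternal_submodule_of_iSupIndep_of_iSup_eq_top D.eigenspaces_iSupIndep hD
  let e := LinearEquiv.ofBijective (DirectSum.coeLinearMap D.eigenspace) hint
  refine ⟨DirectSum.toModule R R V (fun μ ↦ s μ • (D.eigenspace μ).subtype) ∘ₗ e.symm,
    fun μ x hx ↦ ?_⟩
  have hex : e.symm x = DirectSum.lof R R (fun μ ↦ D.eigenspace μ) μ ⟨x, hx⟩ := by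
    rw [LinearEquiv.symm_apply_eq]
    exact (DirectSum.coeLinearMap_lof D.eigenspace μ ⟨x, hx⟩).symm
  simp [hex]

lemma eigenspace_inf_iSup_le {D P : End R V} {s : R → R} (μ : R) :
    D.eigenspace μ ⊓ ⨆ ν, D.eigenspace ν ⊓ P.eigenspace (s ν) ≤ P.eigenspace (s μ) := by
  rintro x ⟨hxμ, hx⟩
  have hsplit : ⨆ ν, D.eigenspace ν ⊓ P.eigenspace (s ν) ≤
      (D.eigenspace μ ⊓ P.eigenspace (s μ)) ⊔ ⨆ ν, ⨆ _ : ν ≠ μ, D.eigenspace ν := by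
    refine iSup_le fun ν ↦ ?_
    rcases eq_or_ne ν μ with rfl | hν
    · exact le_sup_left
    · exact inf_le_left.trans <| le_sup_of_le_right <|
        le_iSup₂ (f := fun ν (_ : ν ≠ μ) ↦ D.eigenspace ν) ν hν
  obtain ⟨a, ⟨haD, haP⟩, b, hb, rfl⟩ := Submodule.mem_sup.1 (hsplit hx)
  have hbμ : b ∈ D.eigenspace μ := by simpa using sub_mem hxμ haD
  have hb0 : b = 0 := Submodule.disjoint_def.1 (D.eigenspaces_iSupIndep μ) b hbμ hb
  rwa [hb0, add_zero]

end Eigenspaces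

section Algebra

open Module Module.End

variable {R A F ι : Type*} [CommRing R] [Ring A] [Algebra R A] [FunLike F A A]
  [AlgHomClass F R A A]

lemma mul_mem_eigenspace {φ : F} {μ ν : R} {x y : A} (hx : x ∈ eigenspace (φ : A →ₗ[R] A) μ)
    (hy : y ∈ eigenspace (φ : A →ₗ[R] A) ν) : x * y ∈ eigenspace (φ : A →ₗ[R] A) (μ * ν) := by
  simp only [mem_eigenspace_iff, LinearMap.coe_coe] at hx hy ⊢
  rw [map_mul, hx, hy, smul_mul_smul_comm]

lemma map_mul_of_eigenspace_le {φ : F} {P : End R A} {s : R → R}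
    (hP : ∀ μ, eigenspace (φ : A →ₗ[R] A) μ ≤ P.eigenspace (s μ)) {ν : ι → R}
    (hν : ⨆ i, eigenspace (φ : A →ₗ[R] A) (ν i) = ⊤)
    (hs : ∀ i j, s (ν i * ν j) = s (ν i) * s (ν j) ∨
      eigenspace (φ : A →ₗ[R] A) (ν i) * eigenspace (φ : A →ₗ[R] A) (ν j) = ⊥) (x y : A) :
    P (x * y) = P x * P y := by
  suffices hbilin : (LinearMap.mul R A).compr₂ P = (LinearMap.mul R A).compl₁₂ P P from
    LinearMap.congr_fun₂ hbilin x y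
  refine linearMap_ext_of_iSup_eq_top hν fun i a ha ↦
    linearMap_ext_of_iSup_eq_top hν fun j b hb ↦ ?_
  change P (a * b) = P a * P b
  rw [mem_eigenspace_iff.1 (hP _ ha), mem_eigenspace_iff.1 (hP _ hb),
    mem_eigenspace_iff.1 (hP _ (mul_mem_eigenspace ha hb)), smul_mul_smul_comm]
  rcases hs i j with hmul | hbot
  · rw [hmul]
  · have hab : a * b = 0 := (Submodule.mem_bot R).1 (hbot ▸ Submodule.mul_mem_mul ha hb)
    rw [hab, smul_zero, smul_zero]

end Algebra

section TensorProduct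

open Module Module.End

lemma tmul_mem_eigenspace {R V W : Type*} [CommRing R] [AddCommGroup V] [AddCommGroup W]
    [Module R V] [Module R W] {D : End R V} {E : End R W} {μ ν : R} {x : V} {y : W}
    (hx : x ∈ D.eigenspace μ) (hy : y ∈ E.eigenspace ν) :
    x ⊗ₜ y ∈ eigenspace (TensorProduct.map D E) (μ * ν) := by
  rw [mem_eigenspace_iff] at hx hy ⊢
  rw [TensorProduct.map_tmul, hx, hy, smul_tmul_smul]

variable [Field k] [AddCommGroup H] [Module k H]

lemma tmul_le_iff {U V : Submodule k H} {W : Submodule k (H ⊗[k] H)} :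
    Submodule.tmul U V ≤ W ↔ ∀ u ∈ U, ∀ v ∈ V, u ⊗ₜ v ∈ W := by
  rw [Submodule.tmul, TensorProduct.range_mapIncl, Submodule.map₂_le]
  rfl

lemma tmul_mono {U U' V V' : Submodule k H} (hU : U ≤ U') (hV : V ≤ V') :
    Submodule.tmul U V ≤ Submodule.tmul U' V' :=
  TensorProduct.range_mapIncl_mono hU hV

lemma tmul_eigenspace_one_sup_le {D P : End k H} {s : k → k} (hs : s 1 = 1)
    (hP : ∀ μ, D.eigenspace μ ≤ P.eigenspace (s μ)) (hD : ⨆ μ, D.eigenspace μ = ⊤) :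
    Submodule.tmul (D.eigenspace 1) ⊤ ⊔ Submodule.tmul ⊤ (D.eigenspace 1) ≤
      ⨆ μ, eigenspace (TensorProduct.map D D) μ ⊓ eigenspace (TensorProduct.map P P) (s μ) := by
  set W := ⨆ μ, eigenspace (TensorProduct.map D D) μ ⊓ eigenspace (TensorProduct.map P P) (s μ)
  have hmem {μ ν : k} (hsμν : s (μ * ν) = s μ * s ν) {x y : H} (hx : x ∈ D.eigenspace μ)
      (hy : y ∈ D.eigenspace ν) : x ⊗ₜ y ∈ W :=
    le_iSup (fun μ ↦ eigenspace (TensorProduct.map D D) μ ⊓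
        eigenspace (TensorProduct.map P P) (s μ)) (μ * ν)
      ⟨tmul_mem_eigenspace hx hy, hsμν ▸ tmul_mem_eigenspace (hP _ hx) (hP _ hy)⟩
  refine sup_le (tmul_le_iff.2 fun x hx ↦ ?_) (tmul_le_iff.2 fun x _ y hy ↦ ?_)
  · suffices h : ⊤ ≤ W.comap (TensorProduct.mk k H H x) from fun y hy ↦ h hy
    exact hD ▸ iSup_le fun μ y hy ↦ hmem (by rw [one_mul, hs, one_mul]) hx hy
  · suffices h : ⊤ ≤ W.comap ((TensorProduct.mk k H H).flip y) from h (Submodule.mem_top (x := x))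
    exact hD ▸ iSup_le fun μ x hx ↦ hmem (by rw [mul_one, hs, mul_one]) hx hy

end TensorProduct

section Coalgebra

open Module Module.End

section Counit

variable {R C F : Type*} [CommRing R] [IsDomain R] [AddCommGroup C] [Module R C] [Coalgebra R C]
  [FunLike F C C] [CoalgHomClass F R C C]

lemma counit_eq_zero_of_mem_eigenspace {φ : F} {μ : R} (hμ : μ ≠ 1) {x : C}
    (hx : x ∈ eigenspace (φ : C →ₗ[R] C) μ) : counit (R := R) x = 0 := by
  rw [mem_eigenspace_iff, LinearMap.coe_coe] at hx
  have hfix : μ * counit (R := R) x = counit x := by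
    rw [← smul_eq_mul, ← map_smul, ← hx, CoalgHomClass.counit_comp_apply]
  by_contra hne
  exact hμ ((mul_eq_right₀ hne).1 hfix)

lemma counit_comp_of_eigenspace_le {φ : F} {P : End R C} {s : R → R} (hs : s 1 = 1)
    (hP : ∀ μ, eigenspace (φ : C →ₗ[R] C) μ ≤ P.eigenspace (s μ))
    (hφ : ⨆ μ, eigenspace (φ : C →ₗ[R] C) μ = ⊤) : counit ∘ₗ P = counit (R := R) := by
  refine linearMap_ext_of_iSup_eq_top hφ fun μ x hx ↦ ?_
  rw [LinearMap.comp_apply, mem_eigenspace_iff.1 (hP μ hx), map_smul]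
  rcases eq_or_ne μ 1 with rfl | hμ
  · rw [hs, one_smul]
  · rw [counit_eq_zero_of_mem_eigenspace hμ hx, smul_zero]

end Counit

lemma map_comp_comul_of_eigenspace_le {F : Type*} [Field k] [AddCommGroup H] [Module k H]
    [Coalgebra k H] [FunLike F H H] [CoalgHomClass F k H H] {φ : F} {P : End k H} {s : k → k}
    (hs : s 1 = 1)
    (hP : ∀ μ, eigenspace (φ : H →ₗ[k] H) μ ≤ P.eigenspace (s μ))
    (hφ : ⨆ μ, eigenspace (φ : H →ₗ[k] H) μ = ⊤)
    (hcomul : LinearMap.range (comul (R := k) (A := H)) ≤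
      Submodule.tmul (eigenspace (φ : H →ₗ[k] H) 1) ⊤ ⊔
        Submodule.tmul ⊤ (eigenspace (φ : H →ₗ[k] H) 1)) :
    TensorProduct.map P P ∘ₗ comul = comul ∘ₗ P := by
  refine linearMap_ext_of_iSup_eq_top hφ fun μ x hx ↦ ?_
  have hxμ : comul x ∈
      eigenspace (TensorProduct.map (φ : H →ₗ[k] H) (φ : H →ₗ[k] H)) μ := by
    rw [mem_eigenspace_iff] at hx ⊢
    rw [← LinearMap.comp_apply, CoalgHomClass.map_comp_comul, LinearMap.comp_apply, hx, map_smul]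
  have hxP : comul x ∈ eigenspace (TensorProduct.map P P) (s μ) :=
    eigenspace_inf_iSup_le μ
      ⟨hxμ, tmul_eigenspace_one_sup_le hs hP hφ (hcomul (LinearMap.mem_range_self _ x))⟩
  rw [LinearMap.comp_apply, LinearMap.comp_apply, mem_eigenspace_iff.1 hxP,
    mem_eigenspace_iff.1 (hP μ hx), map_smul]

lemma range_comul_le_of_sup_eq_top [Field k] [AddCommGroup H] [Module k H] [Coalgebra k H]
    {K M : Submodule k H} (hKM : K ⊔ M = ⊤)
    (hK : Submodule.map (comul (R := k)) K ≤ Submodule.tmul K K)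
    (hM : Submodule.map (comul (R := k)) M ≤ Submodule.tmul K M ⊔ Submodule.tmul M K) :
    LinearMap.range (comul (R := k) (A := H)) ≤ Submodule.tmul K ⊤ ⊔ Submodule.tmul ⊤ K := by
  rw [LinearMap.range_eq_map, ← hKM, Submodule.map_sup, hKM]
  exact sup_le (hK.trans (le_sup_of_le_left (tmul_mono le_rfl le_top)))
    (hM.trans (sup_le_sup (tmul_mono le_rfl le_top) (tmul_mono le_top le_rfl)))

end Coalgebra

section Antipode

open WithConv

variable {R A : Type*} [CommSemiring R] [Semiring A] [HopfAlgebra R A]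

lemma algHom_comp_antipode_convMul_self {B : Type*} [Semiring B] [Algebra R B] (f : A →ₐ[R] B) :
    toConv (f.toLinearMap ∘ₗ antipode R) * toConv f.toLinearMap = 1 := by
  have h := LinearMap.algHom_comp_convMul_distrib f (toConv (antipode R)) (toConv LinearMap.id)
  rw [LinearMap.antipode_mul_id] at h
  refine WithConv.ofConv_injective (h.symm.trans ?_)
  ext x
  simp [LinearMap.convOne_def]

lemma toConv_comul_eq_includeLeft_mul_includeRight :
    toConv (comul (R := R) (A := A)) =
      toConv (Algebra.TensorProduct.includeLeft (S := R)).toLinearMap *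
        toConv Algebra.TensorProduct.includeRight.toLinearMap := by
  have hid : LinearMap.mul' R (A ⊗[R] A) ∘ₗ
      TensorProduct.map (Algebra.TensorProduct.includeLeft (S := R)).toLinearMap
        Algebra.TensorProduct.includeRight.toLinearMap = LinearMap.id := by
    ext a b
    simp
  rw [LinearMap.convMul_def, ofConv_toConv, ofConv_toConv, ← LinearMap.comp_assoc, hid,
    LinearMap.id_comp]

/- Both sides are convolution inverses of `comul`. -/
lemma comul_comp_antipode :
    comul ∘ₗ antipode R (A := A) =
      TensorProduct.map (antipode R) (antipode R) ∘ₗ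
        (TensorProduct.comm R A A).toLinearMap ∘ₗ comul := by
  let i : A →ₐ[R] A ⊗[R] A := Algebra.TensorProduct.includeLeft
  let j : A →ₐ[R] A ⊗[R] A := Algebra.TensorProduct.includeRight
  have hflip : toConv (TensorProduct.map (antipode R) (antipode R) ∘ₗ
      (TensorProduct.comm R A A).toLinearMap ∘ₗ comul) =
      toConv (j.toLinearMap ∘ₗ antipode R) * toConv (i.toLinearMap ∘ₗ antipode R) := by
    have hmap : LinearMap.mul' R (A ⊗[R] A) ∘ₗ TensorProduct.map (j.toLinearMap ∘ₗ antipode R)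
        (i.toLinearMap ∘ₗ antipode R) = TensorProduct.map (antipode R) (antipode R) ∘ₗ
          (TensorProduct.comm R A A).toLinearMap := by
      ext a b
      simp [i, j]
    rw [LinearMap.convMul_def, ofConv_toConv, ofConv_toConv, ← LinearMap.comp_assoc,
      ← LinearMap.comp_assoc, hmap]
  refine WithConv.toConv_injective (left_inv_eq_right_inv ?_ LinearMap.comul_right_inv).symm
  calc _ = toConv (j.toLinearMap ∘ₗ antipode R) * toConv (i.toLinearMap ∘ₗ antipode R) *
        (toConv i.toLinearMap * toConv j.toLinearMap) := by
        rw [hflip, toConv_comul_eq_includeLeft_mul_includeRight]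
    _ = toConv (j.toLinearMap ∘ₗ antipode R) *
        (toConv (i.toLinearMap ∘ₗ antipode R) * toConv i.toLinearMap) * toConv j.toLinearMap := by
        simp only [mul_assoc]
    _ = 1 := by
        rw [algHom_comp_antipode_convMul_self, mul_one, algHom_comp_antipode_convMul_self]

lemma map_antipodeSq_comp_comul :
    TensorProduct.map (antipode R ∘ₗ antipode R) (antipode R ∘ₗ antipode R) ∘ₗ comul =
      comul ∘ₗ antipode R ∘ₗ antipode R (A := A) := by
  have hmap : TensorProduct.map (antipode R ∘ₗ antipode R) (antipode R ∘ₗ antipode R (A := A)) =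
      TensorProduct.map (antipode R) (antipode R) ∘ₗ (TensorProduct.comm R A A).toLinearMap ∘ₗ
        TensorProduct.map (antipode R) (antipode R) ∘ₗ
          (TensorProduct.comm R A A).toLinearMap := by
    ext a b
    simp
  rw [hmap, ← LinearMap.comp_assoc _ _ comul, comul_comp_antipode]
  simp only [LinearMap.comp_assoc, comul_comp_antipode]

variable (R A) in
/-- The square of the antipode of a Hopf algebra, as a bialgebra endomorphism. -/
noncomputable def antipodeSq : A →ₐc[R] A :=
  .ofAlgHom (.ofLinearMap (antipode R ∘ₗ antipode R) (by simp)
      (fun x y ↦ by simp [antipode_mul_antidistrib]))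
    (by ext; simp) (AlgHom.toLinearMap_injective map_antipodeSq_comp_comul)

end Antipode

theorem almostInvolutive_of_trivial_extension_of_fixed_points_general
    [Field k] [Ring H] [Bialgebra k H] (φ : H ≃ₐc[k] H) {ι : Type*} (ν : ι → k)
    (hsquare : ∀ i, IsSquare (ν i))
    (hν : ⨆ i, Module.End.eigenspace (φ : H →ₗ[k] H) (ν i) = ⊤)
    (K M : Submodule k H)
    (hKdef : K = Module.End.eigenspace (φ : H →ₗ[k] H) 1)
    (hMdef : M = ⨆ (i : ι) (_ : ν i ≠ 1), Module.End.eigenspace (φ : H →ₗ[k] H) (ν i))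
    (hKcomul : Submodule.map (comul (R := k)) K ≤ Submodule.tmul K K)
    (hMcomul : Submodule.map (comul (R := k)) M ≤ Submodule.tmul K M ⊔ Submodule.tmul M K)
    (hMM : M * M = ⊥) :
    ∃ σ : H ≃ₐc[k] H, ∀ x : H, σ (σ x) = φ x := by
  have hM (i : ι) (hi : ν i ≠ 1) : Module.End.eigenspace (φ : H →ₗ[k] H) (ν i) ≤ M :=
    hMdef ▸ le_iSup₂ (f := fun i (_ : ν i ≠ 1) ↦ Module.End.eigenspace (φ : H →ₗ[k] H) (ν i)) i hi
  obtain ⟨s, hs_one, hs⟩ := exists_map_one_and_mul_self_eq_of_isSquare k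
  have hφ : ⨆ μ, Module.End.eigenspace (φ : H →ₗ[k] H) μ = ⊤ :=
    top_le_iff.1 (hν ▸ iSup_le fun i ↦ le_iSup (Module.End.eigenspace (φ : H →ₗ[k] H)) (ν i))
  obtain ⟨P, hP⟩ := exists_end_forall_eigenspace_le hφ s
  have hP_sq : P ∘ₗ P = φ := comp_self_eq_of_eigenspace_le hP hν fun i ↦ hs _ (hsquare i)
  have hP_one : P 1 = 1 := by
    have h1 := hP 1 (x := 1) (by simp)
    rwa [hs_one, Module.End.mem_eigenspace_iff, one_smul] at h1
  have hP_mul : ∀ x y, P (x * y) = P x * P y := by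
    refine map_mul_of_eigenspace_le (φ := φ) hP hν fun i j ↦ ?_
    by_cases hi : ν i = 1
    · exact .inl (by rw [hi, hs_one, one_mul, one_mul])
    by_cases hj : ν j = 1
    · exact .inl (by rw [hj, hs_one, mul_one, mul_one])
    exact .inr (le_bot_iff.1 ((mul_le_mul' (hM i hi) (hM j hj)).trans hMM.le))
  have hKM : K ⊔ M = ⊤ := by
    rw [hKdef, hMdef]
    exact eigenspace_sup_iSup_ne_eq_top hν 1
  have hcomul := range_comul_le_of_sup_eq_top hKM hKcomul hMcomul
  rw [hKdef] at hcomul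
  let σ : H →ₐc[k] H := .ofAlgHom (.ofLinearMap P hP_one hP_mul)
    (AlgHom.toLinearMap_injective (counit_comp_of_eigenspace_le (φ := φ) hs_one hP hφ))
    (AlgHom.toLinearMap_injective
      (map_comp_comul_of_eigenspace_le (φ := φ) hs_one hP hφ hcomul))
  have hσσ (x : H) : σ (σ x) = φ x := LinearMap.congr_fun hP_sq x
  have hσ : Function.Bijective (σ ∘ σ) := by
    rw [show σ ∘ σ = φ from funext hσσ]
    exact φ.bijective
  exact ⟨.ofBijective σ ⟨.of_comp hσ.1, .of_comp hσ.2⟩, hσσ⟩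

/-- Let `H` be a Hopf algebra over a field `k` such that `D := S ∘ S` is a
bialgebra automorphism with `D^m = id`, `H` is the direct sum of the eigenspaces
`E_{D,q^i}` for a primitive `m`-th root of unity `q` (with `r` of order `2m`, `r² = q`,
available when `m` is even).  If `K := E_{D,1}` and `M := ⨁_{i ≠ 0} E_{D,q^i}` form a
trivial extension, then `H` is almost involutive. -/
theorem almostInvolutive_of_trivial_extension_of_fixed_points
    [Field k] [Ring H] [HopfAlgebra k H]
    (hbij : Function.Bijective
      (antipode (R := k) (A := H) ∘ₗ antipode (R := k) (A := H)))
    (m : ℕ) (hm : 0 < m)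
    (hDm : ((antipode (R := k) (A := H) ∘ₗ antipode (R := k) (A := H)) ^ m :
      Module.End k H) = 1)
    (q : k) (hq : IsPrimitiveRoot q m)
    (hreven : Even m → ∃ r : k, IsPrimitiveRoot r (2 * m) ∧ r ^ 2 = q)
    (hinternal : DirectSum.IsInternal (fun i : Fin m =>
      Module.End.eigenspace (antipode (R := k) (A := H) ∘ₗ antipode (R := k) (A := H))
        (q ^ (i : ℕ))))
    (K M : Submodule k H)
    (hKdef : K = Module.End.eigenspace
      (antipode (R := k) (A := H) ∘ₗ antipode (R := k) (A := H)) (1 : k))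
    (hMdef : M = ⨆ (i : Fin m) (_ : (i : ℕ) ≠ 0),
      Module.End.eigenspace (antipode (R := k) (A := H) ∘ₗ antipode (R := k) (A := H))
        (q ^ (i : ℕ)))
    -- the trivial extension assumptions
    (hK1 : (1 : H) ∈ K) (hKmul : K * K ≤ K)
    (hKcomul : Submodule.map (comul (R := k)) K ≤ Submodule.tmul K K)
    (hKS : ∀ x ∈ K, antipode (R := k) x ∈ K)
    (hKM : K * M ⊔ M * K ≤ M)
    (hMcomul : Submodule.map (comul (R := k)) M ≤ Submodule.tmul K M ⊔ Submodule.tmul M K)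
    (hMS : ∀ x ∈ M, antipode (R := k) x ∈ M)
    (hMM : M * M = ⊥) :
    ∃ σ : H ≃ₐc[k] H,
      ∀ x : H, σ (σ x) = antipode (R := k) (antipode (R := k) x) := by
  have hq_square : IsSquare q := by
    rcases Nat.even_or_odd m with heven | hodd
    · obtain ⟨r, -, hr⟩ := hreven heven
      exact ⟨r, by rw [← hr, sq]⟩
    · exact isSquare_of_odd_of_pow_eq_one hodd hq.pow_eq_one
  have hq_pow (i : Fin m) : q ^ (i : ℕ) ≠ 1 ↔ (i : ℕ) ≠ 0 :=
    not_congr ⟨fun h ↦ Nat.eq_zero_of_dvd_of_lt (hq.dvd_of_pow_eq_one i h) i.2, fun h ↦ by simp [h]⟩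
  exact almostInvolutive_of_trivial_extension_of_fixed_points_general
    (BialgEquiv.ofBijective (antipodeSq k H) hbij) (fun i : Fin m ↦ q ^ (i : ℕ))
    (fun i ↦ hq_square.pow i) hinternal.submodule_iSup_eq_top K M hKdef
    (by simp only [hq_pow]; exact hMdef) hKcomul hMcomul hMM
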